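/- arXiv:math/0602181 — 2 statements merged into one kernel-verified Lean document; each statement's English description precedes it below -/
import Mathlib

section
/- Assume λ ∈ ℂ \ ℤ, χ_p ≠ 0, and, in case p = 0, additionally χ_0 ∈ ℂ \ ℤ. Then the vacuum vector is cyclic: the smallest ℂ-subspace of F containing 𝟙 and invariant under all the operators G⁺(i−1/2) and G⁻(i−1/2), i ∈ ℤ, is F itself. -/
noncomputable section

/-- The fermionic Fock space `F`: it has basis indexed by pairs `(A, B)` of finite sets of
nonnegative integers, the pair `(A, B)` corresponding to the basis monomial
`Ψ⁺(−n₁−1/2)⋯Ψ⁺(−n_r−1/2)·Ψ⁻(−k₁−1/2)⋯Ψ⁻(−k_s−1/2)·𝟙` where `A = {n₁ > ⋯ > n_r}` and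
`B = {k₁ > ⋯ > k_s}`. -/
abbrev FockF : Type := (Finset ℕ × Finset ℕ) →₀ ℂ

/-- The vacuum vector `𝟙`. -/
def vac : FockF := Finsupp.single (∅, ∅) 1

/-- `(−1)^{#{a ∈ S : a > m}}`. -/
def sgn (S : Finset ℕ) (m : ℕ) : ℂ := (-1 : ℂ) ^ (S.filter fun a => m < a).card

/-- `Ψ⁺(−m−1/2)`: exterior multiplication (creation). -/
def psiPneg (m : ℕ) : Module.End ℂ FockF :=
  Finsupp.lsum ℂ fun AB : Finset ℕ × Finset ℕ => LinearMap.toSpanSingleton ℂ FockF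
    (if m ∈ AB.1 then 0 else sgn AB.1 m • Finsupp.single (insert m AB.1, AB.2) 1)

/-- `Ψ⁺(m+1/2)`: the odd contraction operator pairing with `Ψ⁻(−m−1/2)` (annihilation). -/
def psiPpos (m : ℕ) : Module.End ℂ FockF :=
  Finsupp.lsum ℂ fun AB : Finset ℕ × Finset ℕ => LinearMap.toSpanSingleton ℂ FockF
    (if m ∈ AB.2 then ((-1 : ℂ) ^ AB.1.card * sgn AB.2 m) • Finsupp.single (AB.1, AB.2.erase m) 1
     else 0)

/-- `Ψ⁻(−m−1/2)`: exterior multiplication (creation). -/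
def psiMneg (m : ℕ) : Module.End ℂ FockF :=
  Finsupp.lsum ℂ fun AB : Finset ℕ × Finset ℕ => LinearMap.toSpanSingleton ℂ FockF
    (if m ∈ AB.2 then 0
     else ((-1 : ℂ) ^ AB.1.card * sgn AB.2 m) • Finsupp.single (AB.1, insert m AB.2) 1)

/-- `Ψ⁻(m+1/2)`: the odd contraction operator pairing with `Ψ⁺(−m−1/2)` (annihilation). -/
def psiMpos (m : ℕ) : Module.End ℂ FockF :=
  Finsupp.lsum ℂ fun AB : Finset ℕ × Finset ℕ => LinearMap.toSpanSingleton ℂ FockF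
    (if m ∈ AB.1 then sgn AB.1 m • Finsupp.single (AB.1.erase m, AB.2) 1 else 0)

/-- `PsiP i` is the operator `Ψ⁺(i − 1/2)`, `i ∈ ℤ`. -/
def PsiP (i : ℤ) : Module.End ℂ FockF :=
  if i ≤ 0 then psiPneg (-i).toNat else psiPpos (i - 1).toNat

/-- `PsiM i` is the operator `Ψ⁻(i − 1/2)`, `i ∈ ℤ`. -/
def PsiM (i : ℤ) : Module.End ℂ FockF :=
  if i ≤ 0 then psiMneg (-i).toNat else psiMpos (i - 1).toNat

/-- `G⁺(i−1/2) = (λ − i)·Ψ⁺(i−1/2)`. -/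
def Gplus (lam : ℂ) (i : ℤ) : Module.End ℂ FockF := (lam - (i : ℂ)) • PsiP i

/-- The finite set of indices `k ≥ −p` for which `Ψ⁻(k+i−1/2)` can act nontrivially on the
basis monomial `AB`; outside of it all terms of the locally finite sum defining `G⁻` vanish. -/
def GminusIdx (p : ℕ) (i : ℤ) (AB : Finset ℕ × Finset ℕ) : Finset ℤ :=
  (Finset.Icc (-(p : ℤ)) (-i) ∪ AB.1.image fun a : ℕ => (a : ℤ) + 1 - i).filter
    fun k => -(p : ℤ) ≤ k

/-- `G⁻(i−1/2) = −i·Ψ⁻(i−1/2) + Σ_{k=−p}^∞ χ_{−k}·Ψ⁻(k+i−1/2)` (a locally finite sum). -/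
def Gminus (p : ℕ) (χ : ℤ → ℂ) (i : ℤ) : Module.End ℂ FockF :=
  (-(i : ℂ)) • PsiM i +
    Finsupp.lsum ℂ fun AB : Finset ℕ × Finset ℕ => LinearMap.toSpanSingleton ℂ FockF
      (∑ k ∈ GminusIdx p i AB, χ (-k) • PsiM (k + i) (Finsupp.single AB 1))

end

theorem PsiM_single_pos (j : ℤ) (AB : Finset ℕ × Finset ℕ) (c : ℂ) (hj : 0 < j)
    (h : (j - 1).toNat ∉ AB.1) : PsiM j (Finsupp.single AB c) = 0 := by
  unfold PsiM
  rw [if_neg (by omega)]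
  generalize (j - 1).toNat = m at h
  simp [psiMpos, h]

theorem PsiM_vanish (v : FockF) : ∃ N : ℤ, ∀ j ≥ N, PsiM j v = 0 := by
  induction v using Finsupp.induction_linear with
  | zero => exact ⟨0, by simp⟩
  | add f g hf hg =>
    obtain ⟨N, hN⟩ := hf
    obtain ⟨M, hM⟩ := hg
    refine ⟨max N M, fun j hj => ?_⟩
    rw [map_add, hN j (le_trans (le_max_left _ _) hj), hM j (le_trans (le_max_right _ _) hj),
      add_zero]
  | single AB c =>
    refine ⟨(AB.1.sup id : ℕ) + 2, fun j hj => ?_⟩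
    refine PsiM_single_pos j AB c (by omega) fun hmem => ?_
    have := Finset.le_sup (f := id) hmem
    simp only [id] at this
    omega

theorem Gminus_eq (p : ℕ) (χ : ℤ → ℂ) (i : ℤ) (v : FockF) : ∃ N : ℤ, ∀ M ≥ N,
    Gminus p χ i v = (-(i : ℂ)) • PsiM i v +
      ∑ k ∈ Finset.Icc (-(p : ℤ)) M, χ (-k) • PsiM (k + i) v := by
  induction v using Finsupp.induction_linear with
  | zero => exact ⟨0, by simp⟩
  | add f g hf hg =>
    obtain ⟨N, hN⟩ := hf
    obtain ⟨N', hN'⟩ := hg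
    refine ⟨max N N', fun M hM => ?_⟩
    rw [map_add, hN M (le_trans (le_max_left _ _) hM), hN' M (le_trans (le_max_right _ _) hM)]
    simp only [map_add, smul_add, Finset.sum_add_distrib]
    abel
  | single AB c =>
    refine ⟨max (-i) ((AB.1.sup id : ℕ) + 1 - i), fun M hM => ?_⟩
    have h1 : (-i) ≤ M := le_trans (le_max_left _ _) hM
    have h2 : ((AB.1.sup id : ℕ) + 1 - i : ℤ) ≤ M := le_trans (le_max_right _ _) hM
    have hc : (Finsupp.single AB c : FockF) = c • Finsupp.single AB 1 := by simp
    have hsum : ∑ k ∈ GminusIdx p i AB, χ (-k) • PsiM (k + i) (Finsupp.single AB 1) =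
        ∑ k ∈ Finset.Icc (-(p : ℤ)) M, χ (-k) • PsiM (k + i) (Finsupp.single AB 1) := by
      apply Finset.sum_subset
      · intro k hk
        simp only [GminusIdx, Finset.mem_filter, Finset.mem_union, Finset.mem_Icc,
          Finset.mem_image] at hk ⊢
        refine ⟨hk.2, ?_⟩
        rcases hk.1 with h | ⟨a, ha, rfl⟩
        · omega
        · have := Finset.le_sup (f := id) ha
          simp only [id] at this
          omega
      · intro k hk hk'
        simp only [GminusIdx, Finset.mem_filter, Finset.mem_union, Finset.mem_Icc,
          Finset.mem_image, not_and] at hk hk'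
        have hki : 0 < k + i := by
          by_contra hcon
          exact hk' (Or.inl ⟨hk.1, by omega⟩) hk.1
        rw [PsiM_single_pos _ _ _ hki, smul_zero]
        intro hmem
        exact hk' (Or.inr ⟨_, hmem, by omega⟩) hk.1
    rw [hc]
    simp only [map_smul]
    have : Gminus p χ i (Finsupp.single AB 1) = (-(i : ℂ)) • PsiM i (Finsupp.single AB 1) +
        ∑ k ∈ Finset.Icc (-(p : ℤ)) M, χ (-k) • PsiM (k + i) (Finsupp.single AB 1) := by
      rw [← hsum]
      simp [Gminus]
    rw [this, smul_add, Finset.smul_sum, smul_comm]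
    congr 1
    exact Finset.sum_congr rfl fun k _ => smul_comm _ _ _

theorem sgn_ne (S : Finset ℕ) (m : ℕ) : sgn S m ≠ 0 := by
  unfold sgn
  exact pow_ne_zero _ (by norm_num)

theorem top_of_psi (U : Submodule ℂ FockF) (hvac : vac ∈ U)
    (hP : ∀ i : ℤ, ∀ v ∈ U, PsiP i v ∈ U) (hM : ∀ i : ℤ, ∀ v ∈ U, PsiM i v ∈ U) : U = ⊤ := by
  have hB : ∀ B : Finset ℕ, (Finsupp.single (∅, B) 1 : FockF) ∈ U := by
    intro B
    induction B using Finset.induction_on with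
    | empty => exact hvac
    | insert m B hm ih =>
      have h := hM (-(m : ℤ)) _ ih
      rw [PsiM, if_pos (by omega)] at h
      have e : psiMneg (- -(m : ℤ)).toNat (Finsupp.single (∅, B) 1) =
          sgn B m • (Finsupp.single (∅, insert m B) 1 : FockF) := by
        simp [psiMneg, hm, ← Finsupp.single_mul]
      rw [e] at h
      exact (U.smul_mem_iff (sgn_ne B m)).1 h
  have hA : ∀ A B : Finset ℕ, (Finsupp.single (A, B) 1 : FockF) ∈ U := by
    intro A B
    induction A using Finset.induction_on with
    | empty => exact hB B
    | insert m A hm ih =>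
      have h := hP (-(m : ℤ)) _ ih
      rw [PsiP, if_pos (by omega)] at h
      have e : psiPneg (- -(m : ℤ)).toNat (Finsupp.single (A, B) 1) =
          sgn A m • (Finsupp.single (insert m A, B) 1 : FockF) := by
        simp [psiPneg, hm]
      rw [e] at h
      exact (U.smul_mem_iff (sgn_ne A m)).1 h
  rw [eq_top_iff]
  rintro v -
  induction v using Finsupp.induction_linear with
  | zero => exact U.zero_mem
  | add f g hf hg => exact U.add_mem hf hg
  | single AB c =>
    have hc : (Finsupp.single AB c : FockF) = c • Finsupp.single AB 1 := by simp
    rw [hc]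
    exact U.smul_mem _ (hA AB.1 AB.2)

/-- Under the assumptions of Proposition `vazna-1` (`λ ∈ ℂ \ ℤ`, `χ_p ≠ 0`,
and `χ_0 ∈ ℂ \ ℤ` in case `p = 0`), the vacuum vector `𝟙` is cyclic for the action of the
operators `G⁺(i−1/2)`, `G⁻(i−1/2)`, `i ∈ ℤ`, on `F(λ/z, χ)`: the smallest invariant subspace
of `F` containing `𝟙` is `F` itself (equivalently, every invariant subspace containing `𝟙`
is all of `F`). -/
theorem statement1 (p : ℕ) (χ : ℤ → ℂ) (hχtop : ∀ j : ℤ, (p : ℤ) < j → χ j = 0)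
    (hp : χ p ≠ 0) (h0 : p = 0 → ∀ n : ℤ, χ 0 ≠ (n : ℂ))
    (lam : ℂ) (hlam : ∀ n : ℤ, lam ≠ (n : ℂ))
    (U : Submodule ℂ FockF) (hvac : vac ∈ U)
    (hU : ∀ i : ℤ, ∀ v ∈ U, Gplus lam i v ∈ U ∧ Gminus p χ i v ∈ U) :
    U = ⊤ := by
  refine top_of_psi U hvac ?_ ?_
  · intro i v hv
    have h := (hU i v hv).1
    rw [Gplus, LinearMap.smul_apply] at h
    exact (U.smul_mem_iff (sub_ne_zero.2 (hlam i))).1 h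
  · intro j v hv
    obtain ⟨N, hN⟩ := PsiM_vanish v
    have key : ∀ n : ℕ, ∀ j : ℤ, N - n ≤ j → PsiM j v ∈ U := by
      intro n
      induction n with
      | zero =>
        intro j hj
        rw [hN j (by simpa using hj)]
        exact U.zero_mem
      | succ n ih =>
        intro j hj
        by_cases hj' : N - n ≤ j
        · exact ih j hj'
        have hgt : ∀ l : ℤ, j < l → PsiM l v ∈ U := fun l hl => ih l (by push_cast at hj; omega)
        obtain ⟨M, hM⟩ := Gminus_eq p χ (j + p) v
        have h := (hU (j + p) v hv).2
        rw [hM (max M (-(p : ℤ))) (le_max_left _ _),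
          ← Finset.Ioc_insert_left (le_max_right _ _),
          Finset.sum_insert (by simp)] at h
        have hs : ∑ k ∈ Finset.Ioc (-(p : ℤ)) (max M (-(p : ℤ))),
            χ (-k) • PsiM (k + (j + p)) v ∈ U := by
          refine U.sum_mem fun k hk => U.smul_mem _ (hgt _ ?_)
          have := (Finset.mem_Ioc.1 hk).1
          omega
        rw [← add_assoc] at h
        have h := (U.add_mem_iff_left hs).1 h
        rw [neg_neg, show -(p : ℤ) + (j + p) = j by ring] at h
        by_cases hp0 : p = 0
        · subst hp0
          simp only [Nat.cast_zero, add_zero] at h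
          rw [← add_smul] at h
          refine (U.smul_mem_iff ?_).1 h
          intro hz
          exact h0 rfl j (by linear_combination hz)
        · have h2 : (-((j + p : ℤ) : ℂ)) • PsiM (j + p) v ∈ U :=
            U.smul_mem _ (hgt _ (by omega))
          exact (U.smul_mem_iff hp).1 ((U.add_mem_iff_right h2).1 h)
    exact key (N - j).toNat j (by omega)
end

section
/- The operators G±(r) on F(λ/z, χ) satisfy the defining relations of the Lie superalgebra 𝒜 with central elements acting as scalars: for all i, j ∈ ℤ, {G⁺(i−1/2), G⁺(j−1/2)} = 0, {G⁻(i−1/2), G⁻(j−1/2)} = 0, and {G⁺(i−1/2), G⁻(j−1/2)} = (λ−i)·(χ_{i+j−1} − j·δ_{i+j,1})·Id (where χ_j = 0 for j > p). In particular every anticommutator {G⁺(r), G⁻(s)} is a scalar multiple of the identity. -/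
set_option linter.unusedSimpArgs false
set_option linter.flexible false

/-- Basis monomial. -/
noncomputable def bs (A B : Finset ℕ) : FockF := Finsupp.single (A, B) 1

lemma sgn_insert (S : Finset ℕ) (m n : ℕ) (h : m ∉ S) :
    sgn (insert m S) n = (if n < m then -1 else 1) * sgn S n := by
  unfold sgn
  rw [Finset.filter_insert]
  split_ifs with h1
  · rw [Finset.card_insert_of_notMem (by simp [h]), pow_succ]; ring
  · simp

lemma sgn_erase (S : Finset ℕ) (m n : ℕ) (h : m ∈ S) :
    sgn (S.erase m) n = (if n < m then -1 else 1) * sgn S n := by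
  conv_rhs => rw [← Finset.insert_erase h]
  rw [sgn_insert _ _ _ (by simp)]
  split_ifs <;> simp

lemma sgn_sq (S : Finset ℕ) (m : ℕ) : sgn S m * sgn S m = 1 := by
  unfold sgn; rw [← mul_pow]; simp

lemma par_sq (n : ℕ) : (-1 : ℂ) ^ n * (-1) ^ n = 1 := by
  rw [← mul_pow]; simp

lemma par_insert (S : Finset ℕ) (m : ℕ) (h : m ∉ S) :
    (-1 : ℂ) ^ (insert m S).card = - (-1) ^ S.card := by
  rw [Finset.card_insert_of_notMem h, pow_succ]; ring

lemma par_erase (S : Finset ℕ) (m : ℕ) (h : m ∈ S) :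
    (-1 : ℂ) ^ (S.erase m).card = - (-1) ^ S.card := by
  conv_rhs => rw [← Finset.insert_erase h]
  rw [par_insert _ _ (by simp)]; simp

lemma psiPneg_bs (m : ℕ) (A B : Finset ℕ) : psiPneg m (bs A B) =
    if m ∈ A then 0 else sgn A m • bs (insert m A) B := by
  simp [psiPneg, bs]
lemma psiPpos_bs (m : ℕ) (A B : Finset ℕ) : psiPpos m (bs A B) =
    if m ∈ B then ((-1 : ℂ) ^ A.card * sgn B m) • bs A (B.erase m) else 0 := by
  simp [psiPpos, bs]
lemma psiMneg_bs (m : ℕ) (A B : Finset ℕ) : psiMneg m (bs A B) =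
    if m ∈ B then 0 else ((-1 : ℂ) ^ A.card * sgn B m) • bs A (insert m B) := by
  simp [psiMneg, bs]
lemma psiMpos_bs (m : ℕ) (A B : Finset ℕ) : psiMpos m (bs A B) =
    if m ∈ A then sgn A m • bs (A.erase m) B else 0 := by
  simp [psiMpos, bs]

lemma end_ext {f g : Module.End ℂ FockF} (h : ∀ A B, f (bs A B) = g (bs A B)) : f = g := by
  apply Finsupp.lhom_ext'
  rintro ⟨A, B⟩
  apply LinearMap.ext_ring
  exact h A B

lemma sgn_swap {m n : ℕ} (h : m ≠ n) :
    ((if n < m then -1 else 1 : ℂ)) = - (if m < n then -1 else 1) := by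
  rcases lt_or_gt_of_ne h with h | h
  · simp [h, not_lt.2 h.le]
  · simp [h, not_lt.2 h.le]

lemma PnPn (m n : ℕ) : psiPneg m * psiPneg n + psiPneg n * psiPneg m = 0 := by
  apply end_ext; intro A B
  simp only [LinearMap.add_apply, Module.End.mul_apply, psiPneg_bs, LinearMap.zero_apply]
  by_cases hmn : m = n
  · subst hmn; split_ifs <;> simp [psiPneg_bs]
  by_cases hm : m ∈ A <;> by_cases hn : n ∈ A <;>
    simp [hm, hn, psiPneg_bs, hmn, Ne.symm hmn, sgn_insert, smul_smul, Finset.insert_comm n m]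
  rcases lt_or_gt_of_ne hmn with h | h <;> simp only [h, h.not_gt, if_true, if_false] <;> module

lemma MnMn (m n : ℕ) : psiMneg m * psiMneg n + psiMneg n * psiMneg m = 0 := by
  apply end_ext; intro A B
  simp only [LinearMap.add_apply, Module.End.mul_apply, psiMneg_bs, LinearMap.zero_apply]
  by_cases hmn : m = n
  · subst hmn; split_ifs <;> simp [psiMneg_bs]
  by_cases hm : m ∈ B <;> by_cases hn : n ∈ B <;>
    simp [hm, hn, psiMneg_bs, hmn, Ne.symm hmn, sgn_insert, smul_smul, Finset.insert_comm n m]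
  rcases lt_or_gt_of_ne hmn with h | h <;> simp only [h, h.not_gt, if_true, if_false] <;> module

lemma PpPp (m n : ℕ) : psiPpos m * psiPpos n + psiPpos n * psiPpos m = 0 := by
  apply end_ext; intro A B
  simp only [LinearMap.add_apply, Module.End.mul_apply, psiPpos_bs, LinearMap.zero_apply]
  by_cases hmn : m = n
  · subst hmn; split_ifs <;> simp [psiPpos_bs]
  by_cases hm : m ∈ B <;> by_cases hn : n ∈ B <;>
    simp [hm, hn, psiPpos_bs, hmn, Ne.symm hmn, sgn_erase, smul_smul,
      Finset.erase_right_comm (a := n) (b := m)]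
  rcases lt_or_gt_of_ne hmn with h | h <;> simp only [h, h.not_gt, if_true, if_false] <;> module

lemma MpMp (m n : ℕ) : psiMpos m * psiMpos n + psiMpos n * psiMpos m = 0 := by
  apply end_ext; intro A B
  simp only [LinearMap.add_apply, Module.End.mul_apply, psiMpos_bs, LinearMap.zero_apply]
  by_cases hmn : m = n
  · subst hmn; split_ifs <;> simp [psiMpos_bs]
  by_cases hm : m ∈ A <;> by_cases hn : n ∈ A <;>
    simp [hm, hn, psiMpos_bs, hmn, Ne.symm hmn, sgn_erase, smul_smul,
      Finset.erase_right_comm (a := n) (b := m)]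
  rcases lt_or_gt_of_ne hmn with h | h <;> simp only [h, h.not_gt, if_true, if_false] <;> module

lemma PnPp (m n : ℕ) : psiPneg m * psiPpos n + psiPpos n * psiPneg m = 0 := by
  apply end_ext; intro A B
  simp only [LinearMap.add_apply, Module.End.mul_apply, psiPpos_bs, psiPneg_bs,
    LinearMap.zero_apply]
  by_cases hm : m ∈ A <;> by_cases hn : n ∈ B <;>
    simp [hm, hn, psiPpos_bs, psiPneg_bs, pow_succ, smul_smul]
  rw [← neg_smul, ← add_smul]; convert zero_smul ℂ _; ring

lemma MnMp (m n : ℕ) : psiMneg m * psiMpos n + psiMpos n * psiMneg m = 0 := by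
  apply end_ext; intro A B
  simp only [LinearMap.add_apply, Module.End.mul_apply, psiMpos_bs, psiMneg_bs,
    LinearMap.zero_apply]
  by_cases hm : m ∈ B <;> by_cases hn : n ∈ A <;>
    simp [hm, hn, psiMpos_bs, psiMneg_bs, par_erase, smul_smul, -Finset.card_erase_of_mem]
  rw [← neg_smul, ← add_smul]; convert zero_smul ℂ _; ring

lemma PnMn (m n : ℕ) : psiPneg m * psiMneg n + psiMneg n * psiPneg m = 0 := by
  apply end_ext; intro A B
  simp only [LinearMap.add_apply, Module.End.mul_apply, psiPneg_bs, psiMneg_bs,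
    LinearMap.zero_apply]
  by_cases hm : m ∈ A <;> by_cases hn : n ∈ B <;>
    simp [hm, hn, psiPneg_bs, psiMneg_bs, pow_succ, smul_smul]
  rw [← neg_smul, ← add_smul]; convert zero_smul ℂ _; ring

lemma PpMp (m n : ℕ) : psiPpos m * psiMpos n + psiMpos n * psiPpos m = 0 := by
  apply end_ext; intro A B
  simp only [LinearMap.add_apply, Module.End.mul_apply, psiPpos_bs, psiMpos_bs,
    LinearMap.zero_apply]
  by_cases hm : m ∈ B <;> by_cases hn : n ∈ A <;>
    simp [hm, hn, psiPpos_bs, psiMpos_bs, par_erase, smul_smul, -Finset.card_erase_of_mem]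
  rw [← neg_smul, ← add_smul]; convert zero_smul ℂ _; ring

lemma PnMp (m n : ℕ) : psiPneg m * psiMpos n + psiMpos n * psiPneg m =
    if m = n then 1 else 0 := by
  apply end_ext; intro A B
  simp only [LinearMap.add_apply, Module.End.mul_apply, psiPneg_bs, psiMpos_bs]
  by_cases hmn : m = n
  · subst hmn
    by_cases hm : m ∈ A <;>
      simp [hm, psiPneg_bs, psiMpos_bs, sgn_insert, sgn_erase, smul_smul, sgn_sq,
        -Finsupp.smul_single]
  by_cases hm : m ∈ A <;> by_cases hn : n ∈ A <;>
    simp [hm, hn, psiPneg_bs, psiMpos_bs, hmn, Ne.symm hmn, sgn_insert, sgn_erase, smul_smul,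
      -Finsupp.smul_single]
  rw [Finset.erase_insert_of_ne hmn]
  rcases lt_or_gt_of_ne hmn with h | h <;> simp only [h, h.not_gt, if_true, if_false] <;> module

lemma PpMn (m n : ℕ) : psiPpos m * psiMneg n + psiMneg n * psiPpos m =
    if m = n then 1 else 0 := by
  apply end_ext; intro A B
  simp only [LinearMap.add_apply, Module.End.mul_apply, psiPpos_bs, psiMneg_bs]
  have e : ∀ x y : ℂ, x * y * (x * y) = (x * x) * (y * y) := fun x y => by ring
  by_cases hmn : m = n
  · subst hmn
    by_cases hm : m ∈ B <;>
      simp [hm, psiPpos_bs, psiMneg_bs, sgn_insert, sgn_erase, smul_smul, sgn_sq,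
        -Finsupp.smul_single] <;>
      rw [e, par_sq, sgn_sq, one_mul, one_smul]
  by_cases hm : m ∈ B <;> by_cases hn : n ∈ B <;>
    simp [hm, hn, psiPpos_bs, psiMneg_bs, hmn, Ne.symm hmn, sgn_insert, sgn_erase, smul_smul,
      -Finsupp.smul_single]
  rw [Finset.erase_insert_of_ne (Ne.symm hmn)]
  rcases lt_or_gt_of_ne hmn with h | h <;> simp only [h, h.not_gt, if_true, if_false] <;> module

lemma PP (i j : ℤ) : PsiP i * PsiP j + PsiP j * PsiP i = 0 := by
  unfold PsiP
  split_ifs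
  · exact PnPn _ _
  · exact PnPp _ _
  · rw [add_comm]; exact PnPp _ _
  · exact PpPp _ _

lemma MM (i j : ℤ) : PsiM i * PsiM j + PsiM j * PsiM i = 0 := by
  unfold PsiM
  split_ifs
  · exact MnMn _ _
  · exact MnMp _ _
  · rw [add_comm]; exact MnMp _ _
  · exact MpMp _ _

lemma PM (i j : ℤ) : PsiP i * PsiM j + PsiM j * PsiP i = if i + j = 1 then 1 else 0 := by
  unfold PsiP PsiM
  split_ifs with h1 h2 h3 h3 h2 h3 h3
  · omega
  · exact PnMn _ _
  · rw [PnMp, if_pos (by omega)]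
  · rw [PnMp, if_neg (by omega)]
  · rw [PpMn, if_pos (by omega)]
  · rw [PpMn, if_neg (by omega)]
  · omega
  · exact PpMp _ _

/-- Truncated version of `Gminus`. -/
noncomputable def Tr (p : ℕ) (χ : ℤ → ℂ) (i K : ℤ) : Module.End ℂ FockF :=
  (-(i : ℂ)) • PsiM i + ∑ k ∈ Finset.Icc (-(p : ℤ)) K, χ (-k) • PsiM (k + i)

lemma Gminus_bs (p : ℕ) (χ : ℤ → ℂ) (i : ℤ) (A B : Finset ℕ) :
    ∀ᶠ K in Filter.atTop, Gminus p χ i (bs A B) = Tr p χ i K (bs A B) := by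
  obtain ⟨K0, hK0⟩ := (GminusIdx p i (A, B)).bddAbove
  filter_upwards [Filter.eventually_ge_atTop K0] with K hK
  simp only [Gminus, Tr, LinearMap.add_apply, LinearMap.sum_apply, LinearMap.smul_apply]
  congr 1
  have : (Finsupp.lsum ℂ fun AB : Finset ℕ × Finset ℕ => LinearMap.toSpanSingleton ℂ FockF
      (∑ k ∈ GminusIdx p i AB, χ (-k) • PsiM (k + i) (Finsupp.single AB 1))) (bs A B) =
      ∑ k ∈ GminusIdx p i (A, B), χ (-k) • PsiM (k + i) (bs A B) := by
    simp [bs]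
  rw [this]
  apply Finset.sum_subset
  · intro k hk
    have := hK0 hk
    simp only [GminusIdx, Finset.mem_filter] at hk
    rw [Finset.mem_Icc]; exact ⟨hk.2, this.trans hK⟩
  · intro k hk hk'
    rw [Finset.mem_Icc] at hk
    simp only [GminusIdx, Finset.mem_filter, Finset.mem_union, Finset.mem_Icc, Finset.mem_image,
      hk.1, and_true, true_and, not_or, not_exists, not_and] at hk'
    have h1 : ¬ (k + i ≤ 0) := by omega
    unfold PsiM
    rw [if_neg h1, psiMpos_bs, if_neg, smul_zero]
    intro h
    exact hk'.2 _ h (by omega)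

lemma Gminus_ev (p : ℕ) (χ : ℤ → ℂ) (i : ℤ) (v : FockF) :
    ∀ᶠ K in Filter.atTop, Gminus p χ i v = Tr p χ i K v := by
  induction v using Finsupp.induction_linear with
  | zero => simp
  | add f g hf hg =>
    filter_upwards [hf, hg] with K h1 h2
    rw [map_add, map_add, h1, h2]
  | single a b =>
    filter_upwards [Gminus_bs p χ i a.1 a.2] with K h
    have : (Finsupp.single a b : FockF) = b • bs a.1 a.2 := by simp [bs]
    rw [this, map_smul, map_smul, h]

lemma anti_sum {R : Type*} [Ring R] [Algebra ℂ R] {ι : Type*} (x : R) (s : Finset ι)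
    (c : ι → ℂ) (f : ι → R) :
    x * (∑ k ∈ s, c k • f k) + (∑ k ∈ s, c k • f k) * x = ∑ k ∈ s, c k • (x * f k + f k * x) := by
  simp [Finset.mul_sum, Finset.sum_mul, Finset.sum_add_distrib, smul_add]

lemma PsiM_Tr (p : ℕ) (χ : ℤ → ℂ) (i j K : ℤ) :
    PsiM i * Tr p χ j K + Tr p χ j K * PsiM i = 0 := by
  have h := anti_sum (PsiM i) (Finset.Icc (-(p : ℤ)) K) (fun k => χ (-k)) (fun k => PsiM (k + j))
  simp only [MM, smul_zero, Finset.sum_const_zero] at h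
  unfold Tr
  have h2 := MM i j
  calc _ = (-(j : ℂ)) • (PsiM i * PsiM j + PsiM j * PsiM i) + _ := by
        rw [mul_add, add_mul, add_add_add_comm, mul_smul_comm, smul_mul_assoc, ← smul_add]
    _ = 0 := by rw [h2, h]; simp

lemma Tr_Tr (p : ℕ) (χ : ℤ → ℂ) (i j K : ℤ) :
    Tr p χ i K * Tr p χ j K + Tr p χ j K * Tr p χ i K = 0 := by
  have h := anti_sum (Tr p χ j K) (Finset.Icc (-(p : ℤ)) K) (fun k => χ (-k))
    (fun k => PsiM (k + i))
  have h3 : ∀ k, Tr p χ j K * PsiM k + PsiM k * Tr p χ j K = 0 := fun k => by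
    rw [add_comm]; exact PsiM_Tr _ _ _ _ _
  simp only [h3, smul_zero, Finset.sum_const_zero] at h
  rw [add_comm]
  generalize Tr p χ j K = T at h h3 ⊢
  unfold Tr
  rw [mul_add, add_mul, add_add_add_comm, mul_smul_comm, smul_mul_assoc, ← smul_add, h, h3]
  simp

lemma PsiP_Tr (p : ℕ) (χ : ℤ → ℂ) (hχtop : ∀ j : ℤ, (p : ℤ) < j → χ j = 0) (i j K : ℤ)
    (hK : 1 - i - j ≤ K) :
    PsiP i * Tr p χ j K + Tr p χ j K * PsiP i =
      (χ (i + j - 1) - if i + j = 1 then (j : ℂ) else 0) • (1 : Module.End ℂ FockF) := by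
  have h := anti_sum (PsiP i) (Finset.Icc (-(p : ℤ)) K) (fun k => χ (-k)) (fun k => PsiM (k + j))
  have h4 : ∑ k ∈ Finset.Icc (-(p : ℤ)) K,
      χ (-k) • (PsiP i * PsiM (k + j) + PsiM (k + j) * PsiP i) =
      χ (i + j - 1) • (1 : Module.End ℂ FockF) := by
    rw [Finset.sum_eq_single (1 - i - j)]
    · rw [PM, if_pos (by ring)]; congr 2; ring
    · intro k _ hk
      rw [PM, if_neg (by omega), smul_zero]
    · intro hk
      rw [Finset.mem_Icc] at hk
      rw [hχtop _ (by omega), zero_smul]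
  rw [h4] at h
  unfold Tr
  rw [mul_add, add_mul, add_add_add_comm, mul_smul_comm, smul_mul_assoc, ← smul_add, h, PM]
  split_ifs
  · rw [← add_smul]; congr 1; ring
  · simp

/-- On `F(λ/z, χ)` the operators `G±` satisfy the defining relations of the
Lie superalgebra `𝒜`, with the central elements acting as scalars: for all `i, j ∈ ℤ`,
`{G⁺(i−1/2), G⁺(j−1/2)} = 0`, `{G⁻(i−1/2), G⁻(j−1/2)} = 0`, and
`{G⁺(i−1/2), G⁻(j−1/2)} = (λ−i)·(χ_{i+j−1} − j·δ_{i+j,1})·Id`.  In particular every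
anticommutator `{G⁺(r), G⁻(s)}` is a scalar multiple of the identity. -/
theorem statement9 (p : ℕ) (χ : ℤ → ℂ) (hχtop : ∀ j : ℤ, (p : ℤ) < j → χ j = 0)
    (lam : ℂ) (i j : ℤ) :
    Gplus lam i * Gplus lam j + Gplus lam j * Gplus lam i = 0 ∧
    Gminus p χ i * Gminus p χ j + Gminus p χ j * Gminus p χ i = 0 ∧
    Gplus lam i * Gminus p χ j + Gminus p χ j * Gplus lam i =
      ((lam - (i : ℂ)) * (χ (i + j - 1) - if i + j = 1 then (j : ℂ) else 0)) •
        (1 : Module.End ℂ FockF) ∧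
    ∃ c : ℂ, Gplus lam i * Gminus p χ j + Gminus p χ j * Gplus lam i =
      c • (1 : Module.End ℂ FockF) := by
  have h3 : Gplus lam i * Gminus p χ j + Gminus p χ j * Gplus lam i =
      ((lam - (i : ℂ)) * (χ (i + j - 1) - if i + j = 1 then (j : ℂ) else 0)) •
        (1 : Module.End ℂ FockF) := by
    apply LinearMap.ext
    intro v
    obtain ⟨K, h1, h2, hK⟩ := ((Gminus_ev p χ j v).and ((Gminus_ev p χ j (PsiP i v)).and
      (Filter.eventually_ge_atTop (1 - i - j)))).exists
    have h := LinearMap.congr_fun (PsiP_Tr p χ hχtop i j K hK) v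
    simp only [LinearMap.add_apply, Module.End.mul_apply] at h
    simp only [Gplus, LinearMap.add_apply, Module.End.mul_apply, LinearMap.smul_apply, map_smul]
    rw [h1, h2, ← smul_add, h, mul_smul]
    rfl
  refine ⟨?_, ?_, h3, _, h3⟩
  · have h := PP i j
    simp only [Gplus, smul_mul_assoc, mul_smul_comm]
    rw [smul_comm (lam - (j : ℂ)), ← smul_add, ← smul_add, h]
    simp
  · apply LinearMap.ext
    intro v
    obtain ⟨K, h1, h2, h3, h4⟩ := ((Gminus_ev p χ i v).and ((Gminus_ev p χ j v).and
      ((Gminus_ev p χ i (Gminus p χ j v)).and (Gminus_ev p χ j (Gminus p χ i v))))).exists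
    have h := LinearMap.congr_fun (Tr_Tr p χ i j K) v
    simp only [LinearMap.add_apply, Module.End.mul_apply] at h ⊢
    rw [h3, h4, h1, h2, h]
end
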